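/- For t > 0 let P_t(1/2+iτ) = ∑_{p ≤ t, p prime} p^{-(1/2+iτ)}. Then for every real x, lim_{t→∞} lim_{T→∞} (1/T) · Leb{ τ ∈ [T,2T] : Re P_t(1/2+iτ) ≤ x · √( (1/2) log log t ) } = Φ(x), where Φ(x) = (1/√(2π)) ∫_{-∞}^x e^{-u²/2} du is the standard normal distribution function; that is, Re P_t(1/2+iτ) / √((1/2) log log t) converges in distribution to a standard normal random variable. -/

import Mathlib

open MeasureTheory Filter Real

/-- The set of primes `p ≤ t`. -/
noncomputable def primesUpTo (t : ℝ) : Finset ℕ :=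
  (Finset.range (⌊t⌋₊ + 1)).filter Nat.Prime

/-- The truncated prime zeta function `P_t(1/2 + iτ) = ∑_{p ≤ t} p^{-(1/2+iτ)}`. -/
noncomputable def primeZetaTrunc (t : ℝ) (τ : ℝ) : ℂ :=
  ∑ p ∈ primesUpTo t, (p : ℂ) ^ (-(1 / 2 + Complex.I * (τ : ℂ)))

/-- The standard normal distribution function `Φ(x)`. -/
noncomputable def stdNormalCDF (x : ℝ) : ℝ :=
  (1 / Real.sqrt (2 * π)) * ∫ u in Set.Iic x, Real.exp (-u ^ 2 / 2)

/-!
As `T → ∞`, the frequencies `log p` with `p ≤ t` being linearly independent over `ℤ` by unique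
factorization, Weyl's criterion shows that `(τ log p / 2π)` for `p ≤ t` becomes uniformly
distributed on a torus. The limiting probability is therefore that of a weighted sum of independent
random cosines; passing to the limit on the event `≤ x` is legitimate because this sum has no atoms.

As `t → ∞`, this sum obeys a central limit theorem for weighted sums of i.i.d. variables
(Hájek–Šidák): the variance converges since Mertens' theorem gives
`∑ p ≤ t, 1 / p = log log t + O(1)`, and no single weight dominates because they are bounded by
`1 / √(log log t)`.
-/

section Mertens

open ArithmeticFunction hiding log
open Finset
open scoped Topology

lemma log_factorial_eq_sum_log (N : ℕ) : log N.factorial = ∑ n ∈ Ioc 0 N, log n := by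
  induction N with
  | zero => simp
  | succ N ih =>
    rw [sum_Ioc_succ_top N.zero_le, ← ih, Nat.factorial_succ, Nat.cast_mul,
      log_mul (by positivity) (by positivity), add_comm]

lemma log_factorial_eq_sum_vonMangoldt (N : ℕ) :
    log N.factorial = ∑ n ∈ Ioc 0 N, Λ n * (N / n : ℕ) := by
  rw [← sum_Ioc_mul_zeta_eq_sum, vonMangoldt_mul_zeta, log_factorial_eq_sum_log]
  rfl

lemma log_factorial_le_mul_sum_vonMangoldt_div (N : ℕ) :
    log N.factorial ≤ N * ∑ n ∈ Ioc 0 N, Λ n / n := by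
  rw [log_factorial_eq_sum_vonMangoldt, mul_sum]
  refine sum_le_sum fun n _ ↦ ?_
  calc Λ n * (N / n : ℕ) ≤ Λ n * (N / n) :=
        mul_le_mul_of_nonneg_left Nat.cast_div_le vonMangoldt_nonneg
    _ = N * (Λ n / n) := by ring

lemma mul_sum_vonMangoldt_div_le_log_factorial_add_psi (N : ℕ) :
    N * ∑ n ∈ Ioc 0 N, Λ n / n ≤ log N.factorial + Chebyshev.psi N := by
  rw [log_factorial_eq_sum_vonMangoldt, mul_sum, Chebyshev.psi, Nat.floor_natCast,
    ← sum_add_distrib]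
  gcongr with n
  calc N * (Λ n / n) = Λ n * (N / n) := by ring
    _ ≤ Λ n * ((N / n : ℕ) + 1) :=
        mul_le_mul_of_nonneg_left (by
          rw [← Nat.floor_div_eq_div (K := ℝ)]; exact (Nat.lt_floor_add_one _).le)
          vonMangoldt_nonneg
    _ = Λ n * (N / n : ℕ) + Λ n := by ring

lemma abs_sum_vonMangoldt_div_sub_log_le {N : ℕ} (hN : N ≠ 0) :
    |∑ n ∈ Ioc 0 N, Λ n / n - log N| ≤ log 4 + 4 := by
  have hN_pos : (0 : ℝ) < N := by positivity
  have h_lower : log N - 1 ≤ ∑ n ∈ Ioc 0 N, Λ n / n := by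
    refine le_of_mul_le_mul_left ?_ hN_pos
    linarith [log_factorial_le_mul_sum_vonMangoldt_div N, Stirling.le_log_factorial_stirling hN,
      log_natCast_nonneg N, log_nonneg (x := 2 * π) (by linarith [pi_gt_three])]
  have h_upper : ∑ n ∈ Ioc 0 N, Λ n / n ≤ log N + (log 4 + 4) := by
    have h_factorial : log N.factorial ≤ N * log N := by
      rw [← log_pow]
      exact log_le_log (by positivity) (mod_cast Nat.factorial_le_pow N)
    refine le_of_mul_le_mul_left ?_ hN_pos
    linarith [mul_sum_vonMangoldt_div_le_log_factorial_add_psi N,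
      Chebyshev.psi_le_const_mul_self hN_pos.le]
  rw [abs_le]
  constructor <;> linarith [log_nonneg (x := 4) (by norm_num)]

lemma summable_vonMangoldt_non_primes_div :
    Summable fun n : ℕ ↦ (if n.Prime then 0 else Λ n) / n := by
  have h := vonMangoldt.summable_residueClass_non_primes_div (q := 1) 0
  have h_univ : {n : ℕ | (n : ZMod 1) = 0} = Set.univ :=
    Set.eq_univ_of_forall fun _ ↦ Subsingleton.elim _ _
  simpa only [vonMangoldt.residueClass, h_univ, Set.indicator_univ] using h

lemma sum_Ioc_floor_eq_sum_primesUpTo_add (t : ℝ) :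
    ∑ n ∈ Ioc 0 ⌊t⌋₊, Λ n / n = ∑ p ∈ primesUpTo t, log p / p +
      ∑ n ∈ range (⌊t⌋₊ + 1), (if n.Prime then 0 else Λ n) / n := by
  have h_Ioc : ∑ n ∈ Ioc 0 ⌊t⌋₊, Λ n / n = ∑ n ∈ range (⌊t⌋₊ + 1), Λ n / n := by
    refine sum_subset (fun n ↦ by simp) fun n _ hn ↦ ?_
    obtain rfl : n = 0 := by simp_all
    simp
  rw [h_Ioc, primesUpTo, sum_filter, ← sum_add_distrib]
  refine sum_congr rfl fun n _ ↦ ?_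
  split_ifs with hn
  · rw [vonMangoldt_apply_prime hn, zero_div, add_zero]
  · rw [zero_add]

lemma exists_abs_sum_log_prime_div_sub_log_le :
    ∃ C, ∀ t, 1 ≤ t → |∑ p ∈ primesUpTo t, log p / p - log t| ≤ C := by
  refine ⟨log 4 + 5 + ∑' n : ℕ, (if n.Prime then 0 else Λ n) / n, fun t ht ↦ ?_⟩
  have h_nonneg (n : ℕ) : 0 ≤ (if n.Prime then 0 else Λ n) / n := by
    have := vonMangoldt_nonneg (n := n)
    split_ifs <;> positivity
  have h_floor_pos : 1 ≤ ⌊t⌋₊ := (Nat.one_le_floor_iff t).2 ht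
  have h_floor_pos' : (1 : ℝ) ≤ ⌊t⌋₊ := mod_cast h_floor_pos
  have h_floor_le : log ⌊t⌋₊ ≤ log t :=
    log_le_log (by linarith) (Nat.floor_le (by linarith))
  have h_le_floor : log t ≤ log ⌊t⌋₊ + 1 := by
    have : log t ≤ log (2 * ⌊t⌋₊) :=
      log_le_log (by linarith) (by linarith [Nat.lt_floor_add_one t])
    rw [log_mul (by norm_num) (by linarith)] at this
    linarith [log_two_lt_d9]
  have h_mangoldt := abs_le.1 (abs_sum_vonMangoldt_div_sub_log_le (N := ⌊t⌋₊) (by lia))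
  have h_tail := summable_vonMangoldt_non_primes_div.sum_le_tsum (range (⌊t⌋₊ + 1))
    fun n _ ↦ h_nonneg n
  have h_tail_nonneg := sum_nonneg fun n (_ : n ∈ range (⌊t⌋₊ + 1)) ↦ h_nonneg n
  rw [sum_Ioc_floor_eq_sum_primesUpTo_add] at h_mangoldt
  rw [abs_le]
  constructor <;> linarith

lemma continuousOn_inv_div_log_pow (k : ℕ) :
    ContinuousOn (fun u : ℝ ↦ u⁻¹ / log u ^ k) (Set.Ioi 1) := by
  intro u hu
  have hu0 : u ≠ 0 := (zero_lt_one.trans hu).ne'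
  have : log u ^ k ≠ 0 := pow_ne_zero _ (log_pos hu).ne'
  exact ContinuousAt.continuousWithinAt (by fun_prop (disch := assumption))

lemma uIcc_subset_Ioi_one {a b : ℝ} (ha : 1 < a) (hb : 1 < b) : Set.uIcc a b ⊆ Set.Ioi 1 :=
  Set.ordConnected_Ioi.uIcc_subset ha hb

variable {c : ℕ → ℝ} {t : ℝ}

lemma sum_inv_log_mul_eq (h0 : c 0 = 0) (h1 : c 1 = 0) (ht : 2 ≤ t) :
    ∑ n ∈ Icc 0 ⌊t⌋₊, (log n)⁻¹ * c n = (log t)⁻¹ * ∑ n ∈ Icc 0 ⌊t⌋₊, c n +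
      ∫ u in 2..t, u⁻¹ / log u ^ 2 * ∑ n ∈ Icc 0 ⌊u⌋₊, c n := by
  have h_sub : Set.Icc 2 t ⊆ Set.Ioi 1 := fun u hu ↦ one_lt_two.trans_le hu.1
  rw [sum_mul_eq_sub_integral_mul₁ c (f := fun u ↦ (log u)⁻¹) h0 h1,
    ← intervalIntegral.integral_of_le ht, sub_eq_add_neg, ← intervalIntegral.integral_neg,
    deriv_inv_log]
  · simp only [neg_div, neg_mul, neg_neg]
  · exact fun u hu ↦ (differentiableOn_inv_log u (h_sub hu)).differentiableAt
      (Ioi_mem_nhds (h_sub hu))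
  · simp only [deriv_inv_log, neg_div]
    exact ((continuousOn_inv_div_log_pow 2).mono h_sub).neg.integrableOn_Icc

lemma sum_inv_log_mul_sub_log_log_eq (h0 : c 0 = 0) (h1 : c 1 = 0) (ht : 2 ≤ t) :
    ∑ n ∈ Icc 0 ⌊t⌋₊, (log n)⁻¹ * c n - log (log t) =
      (log t)⁻¹ * (∑ n ∈ Icc 0 ⌊t⌋₊, c n - log t) +
        (∫ u in 2..t, u⁻¹ / log u ^ 2 * (∑ n ∈ Icc 0 ⌊u⌋₊, c n - log u)) +
        (1 - log (log 2)) := by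
  have h_sub : Set.uIcc 2 t ⊆ Set.Ioi 1 := uIcc_subset_Ioi_one (by norm_num) (by linarith)
  have h_cont (k : ℕ) : ContinuousOn (fun u : ℝ ↦ u⁻¹ / log u ^ k) (Set.uIcc 2 t) :=
    (continuousOn_inv_div_log_pow k).mono h_sub
  have h_log_pos : 0 < log t := log_pos (by linarith)
  have h_int : IntervalIntegrable (fun u ↦ u⁻¹ / log u ^ 2 * ∑ n ∈ Icc 0 ⌊u⌋₊, c n)
      volume 2 t := by
    rw [intervalIntegrable_iff_integrableOn_Icc_of_le ht]
    exact integrableOn_mul_sum_Icc _ (by norm_num) (Set.uIcc_of_le ht ▸ h_cont 2).integrableOn_Icc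
  have h_integral : ∫ u in 2..t, u⁻¹ / log u ^ 2 * (∑ n ∈ Icc 0 ⌊u⌋₊, c n - log u) =
      (∫ u in 2..t, u⁻¹ / log u ^ 2 * ∑ n ∈ Icc 0 ⌊u⌋₊, c n) - (log (log t) - log (log 2)) := by
    rw [← integral_inv_div_log (by norm_num) (by linarith),
      ← intervalIntegral.integral_sub h_int (by simpa using (h_cont 1).intervalIntegrable)]
    refine intervalIntegral.integral_congr fun u hu ↦ ?_
    have : log u ≠ 0 := (log_pos (h_sub hu)).ne'
    field_simp
  rw [h_integral, sum_inv_log_mul_eq h0 h1 ht]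
  field_simp
  ring

lemma abs_sum_inv_log_mul_sub_log_log_le {C : ℝ} (h0 : c 0 = 0) (h1 : c 1 = 0)
    (hc : ∀ u, 2 ≤ u → |∑ n ∈ Icc 0 ⌊u⌋₊, c n - log u| ≤ C) (ht : 2 ≤ t) :
    |∑ n ∈ Icc 0 ⌊t⌋₊, (log n)⁻¹ * c n - log (log t)| ≤
      C * (log 2)⁻¹ + |1 - log (log 2)| := by
  have h_log_pos : 0 < log t := log_pos (by linarith)
  have h_boundary : |(log t)⁻¹ * (∑ n ∈ Icc 0 ⌊t⌋₊, c n - log t)| ≤ C * (log t)⁻¹ := by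
    rw [abs_mul, abs_of_nonneg (by positivity), mul_comm]
    gcongr
    exact hc t ht
  have h_integral : |∫ u in 2..t, u⁻¹ / log u ^ 2 * (∑ n ∈ Icc 0 ⌊u⌋₊, c n - log u)| ≤
      C * ((log 2)⁻¹ - (log t)⁻¹) := by
    rw [← integral_inv_div_log_sq (by norm_num) (by linarith),
      ← intervalIntegral.integral_const_mul, ← norm_eq_abs]
    refine intervalIntegral.norm_integral_le_of_norm_le ht (ae_of_all _ fun u hu ↦ ?_) ?_
    · have : 0 ≤ u := by linarith [hu.1]
      rw [norm_mul, norm_of_nonneg (by positivity), mul_comm]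
      gcongr
      exact hc u hu.1.le
    · exact (((continuousOn_inv_div_log_pow 2).mono (uIcc_subset_Ioi_one (by norm_num)
        (by linarith))).intervalIntegrable).const_mul _
  rw [sum_inv_log_mul_sub_log_log_eq h0 h1 ht]
  linarith [abs_add_three ((log t)⁻¹ * (∑ n ∈ Icc 0 ⌊t⌋₊, c n - log t))
    (∫ u in 2..t, u⁻¹ / log u ^ 2 * (∑ n ∈ Icc 0 ⌊u⌋₊, c n - log u)) (1 - log (log 2))]

lemma exists_abs_sum_prime_inv_sub_log_log_le :
    ∃ C, ∀ t, 2 ≤ t → |∑ p ∈ primesUpTo t, (p : ℝ)⁻¹ - log (log t)| ≤ C := by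
  obtain ⟨C, hC⟩ := exists_abs_sum_log_prime_div_sub_log_le
  set c : ℕ → ℝ := fun n ↦ if n.Prime then log n / n else 0
  have h_log (u : ℝ) : ∑ p ∈ primesUpTo u, log p / p = ∑ n ∈ Icc 0 ⌊u⌋₊, c n := by
    rw [primesUpTo, sum_filter, Nat.range_succ_eq_Icc_zero]
  have h_inv (u : ℝ) :
      ∑ p ∈ primesUpTo u, (p : ℝ)⁻¹ = ∑ n ∈ Icc 0 ⌊u⌋₊, (log n)⁻¹ * c n := by
    rw [primesUpTo, sum_filter, Nat.range_succ_eq_Icc_zero]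
    refine sum_congr rfl fun n _ ↦ ?_
    by_cases hn : n.Prime
    · have : log n ≠ 0 := (log_pos (mod_cast hn.one_lt)).ne'
      simp only [c, hn, if_true]
      field_simp
    · simp [c, hn]
  refine ⟨C * (log 2)⁻¹ + |1 - log (log 2)|, fun t ht ↦ ?_⟩
  rw [h_inv]
  refine abs_sum_inv_log_mul_sub_log_log_le (by simp [c]) (by simp [c]) (fun u hu ↦ ?_) ht
  exact h_log u ▸ hC u (by linarith)

lemma tendsto_log_log_atTop : Tendsto (fun t ↦ log (log t)) atTop atTop :=
  tendsto_log_atTop.comp tendsto_log_atTop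

lemma tendsto_sum_prime_inv_div_log_log :
    Tendsto (fun t ↦ (∑ p ∈ primesUpTo t, (p : ℝ)⁻¹) / log (log t)) atTop (𝓝 1) := by
  obtain ⟨C, hC⟩ := exists_abs_sum_prime_inv_sub_log_log_le
  have h_error : Tendsto
      (fun t ↦ (∑ p ∈ primesUpTo t, (p : ℝ)⁻¹ - log (log t)) / log (log t)) atTop (𝓝 0) := by
    refine squeeze_zero_norm' ?_ (tendsto_log_log_atTop.const_div_atTop C)
    filter_upwards [eventually_ge_atTop 2, tendsto_log_log_atTop.eventually_gt_atTop 0]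
      with t ht hlog
    rw [norm_div, norm_of_nonneg hlog.le]
    gcongr
    exact hC t ht
  refine (by simpa using h_error.add_const 1 : Tendsto _ _ (𝓝 (1 : ℝ))).congr' ?_
  filter_upwards [tendsto_log_log_atTop.eventually_gt_atTop 0] with t hlog
  field_simp
  ring

end Mertens

lemma linearIndependent_log_primes :
    LinearIndependent ℤ fun p : Nat.Primes ↦ log (p : ℕ) := by
  refine linearIndependent_iff'.2 fun s k h_sum q hq ↦ ?_
  have h_real : ∏ p ∈ s, ((p : ℕ) : ℝ) ^ k p = 1 := by
    have h_pos (p : Nat.Primes) : (0 : ℝ) < ((p : ℕ) : ℝ) ^ k p :=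
      zpow_pos (mod_cast p.2.pos) _
    refine eq_one_of_pos_of_log_eq_zero (Finset.prod_pos fun p _ ↦ h_pos p) ?_
    simpa [log_prod fun p _ ↦ (h_pos p).ne'] using h_sum
  have h_rat : ∏ p ∈ s, ((p : ℕ) : ℚ) ^ k p = 1 := by
    rify
    exact h_real
  have : Fact (q : ℕ).Prime := ⟨q.2⟩
  have h_padic : ((q : ℕ) : ℝ)⁻¹ ^ k q = 1 := by
    have h := congrArg (Rat.AbsoluteValue.padic q) h_rat
    rw [map_prod, map_one, Finset.prod_eq_single_of_mem q hq fun p _ hpq ↦ ?_] at h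
    · simpa [map_zpow₀, Rat.AbsoluteValue.padic_eq_padicNorm, padicNorm.padicNorm_p_of_prime]
        using h
    · have : Fact (p : ℕ).Prime := ⟨p.2⟩
      rw [map_zpow₀, Rat.AbsoluteValue.padic_eq_padicNorm,
        padicNorm.padicNorm_of_prime_of_ne fun h ↦ hpq (Subtype.ext h.symm), Rat.cast_one, one_zpow]
  have h_lt : ((q : ℕ) : ℝ)⁻¹ < 1 := inv_lt_one_of_one_lt₀ (mod_cast q.2.one_lt)
  exact (zpow_eq_one_iff_right₀ (by positivity) h_lt.ne).1 h_padic

lemma linearIndependent_log_primesUpTo (t : ℝ) :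
    LinearIndependent ℤ fun p : primesUpTo t ↦ log (p : ℕ) := by
  have h_prime (p : primesUpTo t) : (p : ℕ).Prime := (Finset.mem_filter.1 p.2).2
  exact linearIndependent_log_primes.comp (fun p : primesUpTo t ↦ ⟨p, h_prime p⟩)
    fun p q h ↦ Subtype.ext (congrArg (fun r : Nat.Primes ↦ (r : ℕ)) h)

section Torus

open ProbabilityTheory UnitAddTorus
open scoped Topology

instance isProbabilityMeasure_volume_unitAddCircle :
    IsProbabilityMeasure (volume : Measure UnitAddCircle) :=
  ⟨UnitAddCircle.measure_univ⟩

instance nullSingletonClass_volume_addCircle {T : ℝ} [Fact (0 < T)] :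
    NullSingletonClass (volume : Measure (AddCircle T)) where
  measure_singleton θ := by
    rw [← Metric.closedBall_zero, AddCircle.volume_closedBall, mul_zero,
      min_eq_right (Fact.out : 0 < T).le, ENNReal.ofReal_zero]

lemma integral_fourier_eq_zero {n : ℤ} (hn : n ≠ 0) :
    ∫ θ : UnitAddCircle, fourier n θ = 0 := by
  have h := integral_add_right_eq_self (μ := volume) (fun θ : UnitAddCircle ↦ fourier n θ)
    ((1 / 2 / n : ℝ) : UnitAddCircle)
  simp_rw [fourier_add_half_inv_index hn one_pos, integral_neg] at h
  exact self_eq_neg.1 h.symm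

variable {ι : Type*}

/-- The linear flow on the torus with frequency vector `w`. The time is divided by `2π` because
`UnitAddCircle` has period `1`: the `i`-th coordinate is the argument `t * w i` in turns. -/
noncomputable def torusFlow (w : ι → ℝ) (t : ℝ) : UnitAddTorus ι :=
  fun i ↦ ((t * w i / (2 * π) : ℝ) : UnitAddCircle)

lemma continuous_torusFlow (w : ι → ℝ) : Continuous (torusFlow w) :=
  continuous_pi fun _ ↦ (AddCircle.continuous_mk' 1).comp (by fun_prop)

lemma toCircle_torusFlow (w : ι → ℝ) (t : ℝ) (i : ι) :
    ((torusFlow w t i).toCircle : ℂ) = Complex.exp (t * w i * Complex.I) := by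
  rw [torusFlow, AddCircle.toCircle_apply_mk, Circle.coe_exp]
  push_cast
  congr 2
  field_simp

variable [Fintype ι]

lemma integral_mFourier_eq_zero {n : ι → ℤ} (hn : n ≠ 0) :
    ∫ θ : UnitAddTorus ι, mFourier n θ = 0 := by
  obtain ⟨i, hi⟩ := Function.ne_iff.1 hn
  calc ∫ θ : UnitAddTorus ι, mFourier n θ
      = ∏ i, ∫ θ : UnitAddCircle, fourier (n i) θ :=
        integral_fintype_prod_volume_eq_prod fun i (θ : UnitAddCircle) ↦ fourier (n i) θ
    _ = 0 := Finset.prod_eq_zero (Finset.mem_univ i) (integral_fourier_eq_zero hi)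

variable {κ : Type*} {l : Filter κ}

theorem tendsto_of_tendsto_integral_mFourier {μ : κ → ProbabilityMeasure (UnitAddTorus ι)}
    {ν : ProbabilityMeasure (UnitAddTorus ι)}
    (h : ∀ n : ι → ℤ, n ≠ 0 → Tendsto
      (fun k ↦ ∫ θ, mFourier n θ ∂(μ k : Measure (UnitAddTorus ι))) l
      (𝓝 (∫ θ, mFourier n θ ∂(ν : Measure (UnitAddTorus ι))))) :
    Tendsto μ l (𝓝 ν) := by
  have h_span (f : C(UnitAddTorus ι, ℂ)) (hf : f ∈ Submodule.span ℂ (Set.range mFourier)) :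
      Tendsto (fun k ↦ ∫ θ, f θ ∂(μ k : Measure (UnitAddTorus ι))) l
        (𝓝 (∫ θ, f θ ∂(ν : Measure (UnitAddTorus ι)))) := by
    have h_int (f : C(UnitAddTorus ι, ℂ)) (ρ : ProbabilityMeasure (UnitAddTorus ι)) :
        Integrable f (ρ : Measure (UnitAddTorus ι)) :=
      f.continuous.integrable_of_hasCompactSupport (HasCompactSupport.of_compactSpace f)
    induction hf using Submodule.span_induction with
    | mem f hf =>
      obtain ⟨n, rfl⟩ := hf
      rcases eq_or_ne n 0 with rfl | hn
      · simpa [mFourier_zero] using tendsto_const_nhds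
      · exact h n hn
    | zero => simpa only [ContinuousMap.zero_apply, integral_zero] using tendsto_const_nhds
    | add f g _ _ hf hg =>
      simpa only [ContinuousMap.add_apply, integral_add (h_int f _) (h_int g _)] using hf.add hg
    | smul c f _ hf =>
      simpa only [ContinuousMap.smul_apply, integral_smul] using hf.const_smul c
  refine ProbabilityMeasure.tendsto_of_tight_of_separatesPoints ℂ
    (A := (mFourierSubalgebra ι).comap (BoundedContinuousFunction.toContinuousMapStarₐ ℂ))
    .of_compactSpace (fun x y hxy ↦ ?_) fun g hg ↦ h_span g.toContinuousMap ?_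
  · obtain ⟨_, ⟨f, hf, rfl⟩, hfxy⟩ := mFourierSubalgebra_separatesPoints hxy
    exact ⟨f, ⟨f, ⟨.mkOfCompact f, hf, rfl⟩, rfl⟩, hfxy⟩
  · rw [← mFourierSubalgebra_coe]
    exact hg

lemma mFourier_torusFlow (w : ι → ℝ) (n : ι → ℤ) (t : ℝ) :
    mFourier n (torusFlow w t) = Complex.exp ((∑ i, n i • w i : ℝ) * t * Complex.I) := by
  simp only [mFourier, ContinuousMap.coe_mk, fourier_apply, AddCircle.toCircle_zsmul,
    Circle.coe_zpow, toCircle_torusFlow, ← Complex.exp_int_mul, ← Complex.exp_sum]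
  push_cast
  simp only [zsmul_eq_mul, Finset.sum_mul]
  congr! 2
  ring

variable {Ω : κ → Type*} [∀ k, MeasurableSpace (Ω k)] {P : ∀ k, Measure (Ω k)}
  [∀ k, IsProbabilityMeasure (P k)]

theorem tendstoInDistribution_torusFlow {w : ι → ℝ} (hw : LinearIndependent ℤ w)
    {τ : ∀ k, Ω k → ℝ} (hτ : ∀ k, AEMeasurable (τ k) (P k))
    (h : ∀ s ≠ 0, Tendsto (fun k ↦ charFun ((P k).map (τ k)) s) l (𝓝 0)) :
    TendstoInDistribution (fun k ↦ torusFlow w ∘ τ k) l id P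
      (volume : Measure (UnitAddTorus ι)) where
  forall_aemeasurable k := (continuous_torusFlow w).measurable.comp_aemeasurable (hτ k)
  tendsto := by
    refine tendsto_of_tendsto_integral_mFourier fun n hn ↦ ?_
    have h_charFun (k : κ) : ∫ θ, mFourier n θ ∂(P k).map (torusFlow w ∘ τ k) =
        charFun ((P k).map (τ k)) (∑ i, n i • w i) := by
      rw [charFun_apply_real, integral_map (hτ k) (by fun_prop),
        integral_map ((continuous_torusFlow w).measurable.comp_aemeasurable (hτ k))
          (mFourier n).continuous.aestronglyMeasurable]
      simp only [Function.comp_apply, mFourier_torusFlow]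
    simp only [ProbabilityMeasure.coe_mk, h_charFun, Measure.map_id, integral_mFourier_eq_zero hn]
    exact h _ fun h_zero ↦ hn (funext (Fintype.linearIndependent_iff.1 hw n h_zero))

end Torus

section UniformTime

open scoped Topology

/-- The random time uniformly distributed in `[T, 2T]`, as a function of a uniform random variable
`u` in the unit interval. -/
def uniformTime (T : ℝ) (u : unitInterval) : ℝ :=
  T * (1 + u)

lemma continuous_uniformTime (T : ℝ) : Continuous (uniformTime T) := by
  unfold uniformTime
  fun_prop

lemma charFun_map_uniformTime {T s : ℝ} (hT : T ≠ 0) (hs : s ≠ 0) :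
    charFun (volume.map (uniformTime T)) s =
      (T : ℂ)⁻¹ * ((Complex.exp (s * Complex.I * (2 * T : ℝ)) -
        Complex.exp (s * Complex.I * T)) / (s * Complex.I)) := by
  calc charFun (volume.map (uniformTime T)) s
      = ∫ u : unitInterval, Complex.exp (s * Complex.I * (T * u + T : ℝ)) := by
        rw [charFun_apply_real,
          integral_map (continuous_uniformTime T).aemeasurable (by fun_prop)]
        congr! 3
        push_cast [uniformTime]
        ring
    _ = ∫ u : ℝ in 0..1, Complex.exp (s * Complex.I * (T * u + T : ℝ)) := by
        rw [intervalIntegral.integral_of_le zero_le_one, ← integral_Icc_eq_integral_Ioc]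
        exact integral_subtype measurableSet_Icc
          fun u : ℝ ↦ Complex.exp (s * Complex.I * (T * u + T : ℝ))
    _ = (T : ℂ)⁻¹ * ∫ v : ℝ in T..2 * T, Complex.exp (s * Complex.I * v) := by
        rw [intervalIntegral.integral_comp_mul_add
          (fun v : ℝ ↦ Complex.exp (s * Complex.I * v)) hT T]
        simp [two_mul]
    _ = (T : ℂ)⁻¹ * ((Complex.exp (s * Complex.I * (2 * T : ℝ)) -
          Complex.exp (s * Complex.I * T)) / (s * Complex.I)) := by
        rw [integral_exp_mul_complex (by simp [hs])]

lemma norm_charFun_map_uniformTime_le {T s : ℝ} (hT : 0 < T) (hs : s ≠ 0) :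
    ‖charFun (volume.map (uniformTime T)) s‖ ≤ 2 / |s| / T := by
  have h_norm (v : ℝ) : ‖Complex.exp (s * Complex.I * v)‖ = 1 := by
    rw [mul_right_comm, ← Complex.ofReal_mul, Complex.norm_exp_ofReal_mul_I]
  rw [charFun_map_uniformTime hT.ne' hs, norm_mul, norm_div, norm_inv, norm_mul, Complex.norm_I,
    mul_one, Complex.norm_real, Complex.norm_real, norm_of_nonneg hT.le, norm_eq_abs,
    inv_mul_eq_div]
  gcongr
  exact (norm_sub_le _ _).trans (by rw [h_norm, h_norm]; norm_num)

lemma tendsto_charFun_map_uniformTime {s : ℝ} (hs : s ≠ 0) :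
    Tendsto (fun T ↦ charFun (volume.map (uniformTime T)) s) atTop (𝓝 0) :=
  squeeze_zero_norm' ((eventually_gt_atTop 0).mono fun _ hT ↦
    norm_charFun_map_uniformTime_le hT hs) (tendsto_const_nhds.div_atTop tendsto_id)

lemma one_div_mul_volume_Icc_eq_measureReal_uniformTime {T : ℝ} (hT : 0 < T) (p : ℝ → Prop) :
    1 / T * (volume {τ : ℝ | τ ∈ Set.Icc T (2 * T) ∧ p τ}).toReal =
      volume.real {u : unitInterval | p (uniformTime T u)} := by
  have h_preimage : (Subtype.val '' {u : unitInterval | p (uniformTime T u)}) =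
      (fun u : ℝ ↦ 1 + u) ⁻¹'
        ((fun v : ℝ ↦ T * v) ⁻¹' {τ : ℝ | τ ∈ Set.Icc T (2 * T) ∧ p τ}) := by
    ext u
    simp only [uniformTime, unitInterval, mul_comm 2 T, Set.mem_image, Set.mem_preimage,
      Set.mem_ofPred_eq, Subtype.exists, Set.mem_Icc, exists_and_right, exists_eq_right,
      exists_prop, le_mul_iff_one_le_right hT, mul_le_mul_iff_right₀ hT]
    grind
  rw [measureReal_def, unitInterval.volume_apply, h_preimage, measure_preimage_add,
    Real.volume_preimage_mul_left hT.ne', ENNReal.toReal_mul,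
    ENNReal.toReal_ofReal (abs_nonneg _), abs_of_pos (inv_pos.2 hT), one_div]

end UniformTime

section DistributionFunction

open ProbabilityTheory
open scoped Topology

lemma tendsto_measureReal_le_of_tendstoInDistribution {κ Ω' : Type*} {Ω : κ → Type*}
    [∀ k, MeasurableSpace (Ω k)] [MeasurableSpace Ω'] {P : ∀ k, Measure (Ω k)}
    [∀ k, IsProbabilityMeasure (P k)] {P' : Measure Ω'} [IsProbabilityMeasure P'] {l : Filter κ}
    {X : ∀ k, Ω k → ℝ} {Z : Ω' → ℝ} (h : TendstoInDistribution X l Z P P') {x : ℝ}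
    (hx : P' {ω | Z ω = x} = 0) :
    Tendsto (fun k ↦ (P k).real {ω | X k ω ≤ x}) l (𝓝 (P'.real {ω | Z ω ≤ x})) := by
  have h_law (k : κ) : (P k).real {ω | X k ω ≤ x} = ((P k).map (X k)).real (Set.Iic x) :=
    (map_measureReal_apply_of_aemeasurable (h.forall_aemeasurable k) measurableSet_Iic).symm
  have h_law' : P'.real {ω | Z ω ≤ x} = (P'.map Z).real (Set.Iic x) :=
    (map_measureReal_apply_of_aemeasurable h.aemeasurable_limit measurableSet_Iic).symm
  simp only [h_law, h_law']
  refine (ENNReal.tendsto_toReal (measure_ne_top _ _)).comp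
    (ProbabilityMeasure.tendsto_measure_of_null_frontier_of_tendsto' h.tendsto ?_)
  rw [frontier_Iic, ProbabilityMeasure.coe_mk,
    Measure.map_apply_of_aemeasurable h.aemeasurable_limit (measurableSet_singleton x)]
  exact hx

variable {Ω : Type*} [MeasurableSpace Ω] {P : Measure Ω} [IsFiniteMeasure P]

lemma measure_add_eq_null_of_indepFun {X Y : Ω → ℝ} (hXY : IndepFun X Y P)
    (hX : AEMeasurable X P) (hY : AEMeasurable Y P) (h_null : ∀ c, P {ω | Y ω = c} = 0) (c : ℝ) :
    P {ω | X ω + Y ω = c} = 0 := by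
  have h_meas : MeasurableSet {q : ℝ × ℝ | q.1 + q.2 = c} :=
    measurableSet_eq_fun (by fun_prop) (by fun_prop)
  calc P {ω | X ω + Y ω = c}
      = (P.map fun ω ↦ (X ω, Y ω)) {q | q.1 + q.2 = c} :=
        (Measure.map_apply_of_aemeasurable (hX.prodMk hY) h_meas).symm
    _ = ((P.map X).prod (P.map Y)) {q | q.1 + q.2 = c} := by
        rw [(indepFun_iff_map_prod_eq_prod_map_map hX hY).1 hXY]
    _ = 0 := by
        refine (Measure.measure_prod_null h_meas).2 (Eventually.of_forall fun x ↦ ?_)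
        have h_fibre : Prod.mk x ⁻¹' {q : ℝ × ℝ | q.1 + q.2 = c} = {c - x} := by
          ext y
          simp [eq_sub_iff_add_eq, add_comm]
        beta_reduce
        rw [h_fibre, Measure.map_apply_of_aemeasurable hY (measurableSet_singleton _)]
        exact h_null (c - x)

lemma measure_sum_eq_null_of_iIndepFun {ι : Type*} [Fintype ι] {X : ι → Ω → ℝ}
    (h_indep : iIndepFun X P) (hX : ∀ i, AEMeasurable (X i) P) {j : ι}
    (h_null : ∀ c, P {ω | X j ω = c} = 0) (c : ℝ) :
    P {ω | ∑ i, X i ω = c} = 0 := by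
  classical
  simp only [← Finset.sum_erase_add _ _ (Finset.mem_univ j)]
  refine measure_add_eq_null_of_indepFun ?_ ?_ (hX j) h_null c
  · simpa only [← Finset.sum_apply] using
      h_indep.indepFun_finsetSum_of_notMem₀ hX (Finset.notMem_erase j _)
  · exact Finset.aemeasurable_fun_sum _ fun i _ ↦ hX i

end DistributionFunction

section WeightedCLT

open ProbabilityTheory Asymptotics
open scoped Topology NNReal

lemma norm_prod_sub_prod_le {ι R : Type*} [NormedCommRing R] [NormOneClass R] (s : Finset ι)
    {f g : ι → R} (hf : ∀ i, ‖f i‖ ≤ 1) (hg : ∀ i, ‖g i‖ ≤ 1) :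
    ‖∏ i ∈ s, f i - ∏ i ∈ s, g i‖ ≤ ∑ i ∈ s, ‖f i - g i‖ := by
  classical
  induction s using Finset.induction_on with
  | empty => simp
  | insert j s hj ih =>
    have h_prod : ‖∏ i ∈ s, g i‖ ≤ 1 :=
      (s.norm_prod_le g).trans (Finset.prod_le_one (fun _ _ ↦ norm_nonneg _) fun i _ ↦ hg i)
    rw [Finset.prod_insert hj, Finset.prod_insert hj, Finset.sum_insert hj]
    calc ‖f j * ∏ i ∈ s, f i - g j * ∏ i ∈ s, g i‖
        = ‖(f j - g j) * ∏ i ∈ s, g i + f j * (∏ i ∈ s, f i - ∏ i ∈ s, g i)‖ := by ring_nf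
      _ ≤ ‖f j - g j‖ * ‖∏ i ∈ s, g i‖ + ‖f j‖ * ‖∏ i ∈ s, f i - ∏ i ∈ s, g i‖ :=
        (norm_add_le _ _).trans <| add_le_add (norm_mul_le _ _) (norm_mul_le _ _)
      _ ≤ ‖f j - g j‖ + ∑ i ∈ s, ‖f i - g i‖ :=
        add_le_add (mul_le_of_le_one_right (norm_nonneg _) h_prod)
          ((mul_le_of_le_one_left (norm_nonneg _) (hf j)).trans ih)

lemma charFun_map_sum_mul_eq_prod {ι Ω : Type*} [Fintype ι] [MeasurableSpace Ω] {P : Measure Ω}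
    {X : ι → Ω → ℝ} {ν : Measure ℝ} (h_law : ∀ i, HasLaw (X i) ν P) (h_indep : iIndepFun X P)
    (a : ι → ℝ) (ξ : ℝ) :
    charFun (P.map fun ω ↦ ∑ i, a i * X i ω) ξ = ∏ i, charFun ν ((ξ • a) i) := by
  have h_indep_mul : iIndepFun (fun i ω ↦ a i * X i ω) P :=
    h_indep.comp (fun i ↦ (a i * ·)) fun i ↦ measurable_const_mul (a i)
  rw [h_indep_mul.charFun_map_fun_sum_eq_prod fun i ↦ (h_law i).aemeasurable.const_mul (a i),
    Finset.prod_apply]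
  refine Finset.prod_congr rfl fun i _ ↦ ?_
  rw [charFun_map_mul_comp (h_law i).aemeasurable, (h_law i).map_eq, Pi.smul_apply, smul_eq_mul,
    mul_comm]

variable {κ : Type*} {l : Filter κ} {ι : κ → Type*} [∀ k, Fintype (ι k)] {a : ∀ k, ι k → ℝ}

lemma tendsto_prod_sub_prod_of_isLittleO_sq {f g : ℝ → ℂ} (hf : ∀ b, ‖f b‖ ≤ 1)
    (hg : ∀ b, ‖g b‖ ≤ 1) (hfg : (fun b ↦ f b - g b) =o[𝓝 0] fun b ↦ b ^ 2)
    (h_max : Tendsto (fun k ↦ ‖a k‖) l (𝓝 0))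
    (h_sum : (fun k ↦ ∑ i, a k i ^ 2) =O[l] fun _ ↦ (1 : ℝ)) :
    Tendsto (fun k ↦ ∏ i, f (a k i) - ∏ i, g (a k i)) l (𝓝 0) := by
  suffices h : (fun k ↦ ∏ i, f (a k i) - ∏ i, g (a k i)) =o[l] fun k ↦ ∑ i, a k i ^ 2 from
    (isLittleO_one_iff ℝ).1 (h.trans_isBigO h_sum)
  refine isLittleO_iff.2 fun c hc ↦ ?_
  obtain ⟨ε, hε, h_ball⟩ := Metric.eventually_nhds_iff.1 (isLittleO_iff.1 hfg hc)
  filter_upwards [h_max.eventually_lt_const hε] with k hk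
  have h_term (i : ι k) : ‖f (a k i) - g (a k i)‖ ≤ c * a k i ^ 2 := by
    simpa using h_ball (y := a k i) (by simpa using (norm_le_pi_norm (a k) i).trans_lt hk)
  calc ‖∏ i, f (a k i) - ∏ i, g (a k i)‖
      ≤ ∑ i, ‖f (a k i) - g (a k i)‖ :=
        norm_prod_sub_prod_le _ (fun i ↦ hf (a k i)) fun i ↦ hg (a k i)
    _ ≤ ∑ i, c * a k i ^ 2 := Finset.sum_le_sum fun i _ ↦ h_term i
    _ = c * ‖∑ i, a k i ^ 2‖ := by
        rw [norm_of_nonneg (Finset.sum_nonneg fun i _ ↦ sq_nonneg _), Finset.mul_sum]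

lemma charFun_sub_charFun_isLittleO_sq {ν ν' : Measure ℝ} [IsProbabilityMeasure ν]
    [IsProbabilityMeasure ν'] (h_mean : ν[id] = 0) (h_var : ν[id ^ 2] = 1)
    (h_mean' : ν'[id] = 0) (h_var' : ν'[id ^ 2] = 1) :
    (fun b ↦ charFun ν b - charFun ν' b) =o[𝓝 0] fun b ↦ b ^ 2 := by
  simpa using (taylor_charFun_two aemeasurable_id h_mean h_var).sub
    (taylor_charFun_two aemeasurable_id h_mean' h_var')

lemma charFun_sub_charFun_gaussianReal_isLittleO_sq {ν : Measure ℝ} [IsProbabilityMeasure ν]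
    (h_mean : ν[id] = 0) (h_var : ν[id ^ 2] = 1) :
    (fun b ↦ charFun ν b - charFun (gaussianReal 0 1) b) =o[𝓝 0] fun b ↦ b ^ 2 := by
  refine charFun_sub_charFun_isLittleO_sq h_mean h_var integral_id_gaussianReal ?_
  simpa [variance_of_integral_eq_zero aemeasurable_id integral_id_gaussianReal] using
    variance_id_gaussianReal (μ := 0) (v := 1)

lemma prod_charFun_gaussianReal {ι : Type*} (s : Finset ι) (a : ι → ℝ) :
    ∏ i ∈ s, charFun (gaussianReal 0 1) (a i) =
      Complex.exp (-((∑ i ∈ s, a i ^ 2 : ℝ) / 2)) := by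
  simp [charFun_gaussianReal, ← Complex.exp_sum, Finset.sum_div]

lemma tendsto_prod_charFun_gaussianReal {ν : Measure ℝ} [IsProbabilityMeasure ν]
    (h_mean : ν[id] = 0) (h_var : ν[id ^ 2] = 1) {v : ℝ≥0}
    (h_max : Tendsto (fun k ↦ ‖a k‖) l (𝓝 0))
    (h_sum : Tendsto (fun k ↦ ∑ i, a k i ^ 2) l (𝓝 v)) (ξ : ℝ) :
    Tendsto (fun k ↦ ∏ i, charFun ν ((ξ • a k) i)) l (𝓝 (charFun (gaussianReal 0 v) ξ)) := by
  have h_max_smul : Tendsto (fun k ↦ ‖ξ • a k‖) l (𝓝 0) := by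
    simpa only [norm_smul, mul_zero] using h_max.const_mul ‖ξ‖
  have h_sum_smul : Tendsto (fun k ↦ ∑ i, (ξ • a k) i ^ 2) l (𝓝 (ξ ^ 2 * v)) := by
    simpa only [Pi.smul_apply, smul_eq_mul, mul_pow, ← Finset.mul_sum] using h_sum.const_mul (ξ ^ 2)
  have h_gaussian : Tendsto (fun k ↦ ∏ i, charFun (gaussianReal 0 1) ((ξ • a k) i)) l
      (𝓝 (charFun (gaussianReal 0 v) ξ)) := by
    have h_limit : charFun (gaussianReal 0 v) ξ = Complex.exp (-((ξ ^ 2 * v : ℝ) / 2)) := by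
      rw [charFun_gaussianReal]
      push_cast
      ring_nf
    simp only [prod_charFun_gaussianReal, h_limit]
    exact ((by fun_prop : Continuous fun r : ℝ ↦ Complex.exp (-(r / 2))).tendsto _).comp h_sum_smul
  have h_replace := tendsto_prod_sub_prod_of_isLittleO_sq norm_charFun_le_one
    norm_charFun_le_one (charFun_sub_charFun_gaussianReal_isLittleO_sq h_mean h_var)
    h_max_smul (h_sum_smul.isBigO_one ℝ)
  simpa only [sub_add_cancel, zero_add] using h_replace.add h_gaussian

theorem tendstoInDistribution_sum_mul_gaussianReal [l.IsCountablyGenerated] {Ω : κ → Type*}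
    [∀ k, MeasurableSpace (Ω k)] {P : ∀ k, Measure (Ω k)} [∀ k, IsProbabilityMeasure (P k)]
    {X : ∀ k, ι k → Ω k → ℝ} {ν : Measure ℝ} [IsProbabilityMeasure ν]
    (h_mean : ν[id] = 0) (h_var : ν[id ^ 2] = 1)
    (h_law : ∀ k i, HasLaw (X k i) ν (P k)) (h_indep : ∀ k, iIndepFun (X k) (P k)) {v : ℝ≥0}
    (h_max : Tendsto (fun k ↦ ‖a k‖) l (𝓝 0))
    (h_sum : Tendsto (fun k ↦ ∑ i, a k i ^ 2) l (𝓝 v)) :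
    TendstoInDistribution (fun k ω ↦ ∑ i, a k i * X k i ω) l id P (gaussianReal 0 v) where
  forall_aemeasurable k :=
    Finset.aemeasurable_fun_sum _ fun i _ ↦ (h_law k i).aemeasurable.const_mul (a k i)
  tendsto := by
    refine tendsto_of_seq_tendsto fun u hu ↦
      ProbabilityMeasure.tendsto_of_tendsto_charFun fun ξ ↦ ?_
    simp only [ProbabilityMeasure.coe_mk, Measure.map_id]
    exact ((tendsto_prod_charFun_gaussianReal h_mean h_var h_max h_sum ξ).comp hu).congr fun n ↦
      (charFun_map_sum_mul_eq_prod (h_law (u n)) (h_indep (u n)) (a (u n)) ξ).symm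

end WeightedCLT

section RandomCosines

open ProbabilityTheory UnitAddTorus
open scoped Topology NNReal

/-- The cosine on the circle of period `1`, normalized to have variance `1`. -/
noncomputable def normCos (θ : UnitAddCircle) : ℝ :=
  √2 * (θ.toCircle : ℂ).re

@[fun_prop]
lemma continuous_normCos : Continuous normCos :=
  continuous_const.mul (Complex.continuous_re.comp
    (continuous_subtype_val.comp AddCircle.continuous_toCircle))

lemma integral_re_fourier_eq_zero {n : ℤ} (hn : n ≠ 0) :
    ∫ θ : UnitAddCircle, (fourier n θ).re = 0 := by
  have h_int : Integrable (fourier n : UnitAddCircle → ℂ) :=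
    (fourier n).continuous.integrable_of_hasCompactSupport (.of_compactSpace _)
  exact (integral_re h_int).trans (by rw [integral_fourier_eq_zero hn]; rfl)

lemma integral_normCos : ∫ θ, normCos θ = 0 := by
  simpa [normCos, integral_const_mul] using integral_re_fourier_eq_zero one_ne_zero

lemma normCos_sq (θ : UnitAddCircle) : normCos θ ^ 2 = 1 + (fourier 2 θ).re := by
  have h_norm := Circle.normSq_coe θ.toCircle
  rw [Complex.normSq_apply] at h_norm
  rw [normCos, mul_pow, sq_sqrt zero_le_two, fourier_apply, AddCircle.toCircle_zsmul,
    Circle.coe_zpow, zpow_ofNat, sq (θ.toCircle : ℂ), Complex.mul_re]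
  linear_combination h_norm

lemma integral_normCos_sq : ∫ θ, normCos θ ^ 2 = 1 := by
  have h_int : Integrable fun θ : UnitAddCircle ↦ (fourier 2 θ).re :=
    (Complex.continuous_re.comp (fourier 2).continuous).integrable_of_hasCompactSupport
      (.of_compactSpace _)
  simp_rw [normCos_sq]
  rw [integral_add (integrable_const 1) h_int, integral_re_fourier_eq_zero two_ne_zero]
  simp

lemma finite_circle_re_eq (d : ℝ) : {z : Circle | (z : ℂ).re = d}.Finite := by
  have h_maps : Set.MapsTo (fun z : Circle ↦ (z : ℂ).im) {z | (z : ℂ).re = d}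
      {√(1 - d ^ 2), -√(1 - d ^ 2)} := by
    intro z (hz : (z : ℂ).re = d)
    have h_im : (z : ℂ).im ^ 2 = 1 - d ^ 2 := by
      linear_combination (Complex.normSq_apply z).symm.trans (Circle.normSq_coe z) -
        ((z : ℂ).re + d) * hz
    rw [← h_im, sqrt_sq_eq_abs]
    exact eq_or_eq_neg_of_abs_eq rfl
  have h_inj : Set.InjOn (fun z : Circle ↦ (z : ℂ).im) {z | (z : ℂ).re = d} :=
    fun z hz z' hz' h_im ↦ Circle.ext (Complex.ext (hz.trans hz'.symm) h_im)
  exact .of_injOn h_maps h_inj (Set.toFinite _)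

lemma volume_normCos_eq_null (c : ℝ) : volume {θ | normCos θ = c} = 0 := by
  have h_fibre : ((fun θ : UnitAddCircle ↦ θ.toCircle) ⁻¹' {z | (z : ℂ).re = c / √2}).Finite :=
    (finite_circle_re_eq _).preimage (AddCircle.injective_toCircle one_ne_zero).injOn
  refine measure_mono_null (fun θ hθ ↦ ?_) (h_fibre.measure_zero _)
  rw [Set.mem_preimage, Set.mem_ofPred_eq, eq_div_iff (by positivity), mul_comm]
  exact hθ

variable {ι : Type*}

lemma normCos_torusFlow (w : ι → ℝ) (t : ℝ) (i : ι) :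
    normCos (torusFlow w t i) = √2 * cos (t * w i) := by
  rw [normCos, toCircle_torusFlow, ← Complex.ofReal_mul, Complex.exp_ofReal_mul_I_re]

variable [Fintype ι]

/-- The weighted sum of normalized cosines of the coordinates of a point of the torus: the random
model for the prime sum, in which the `p ^ (-iτ)` become independent. -/
noncomputable def cosineSum (a : ι → ℝ) (θ : UnitAddTorus ι) : ℝ :=
  ∑ i, a i * normCos (θ i)

lemma continuous_cosineSum (a : ι → ℝ) : Continuous (cosineSum a) := by
  unfold cosineSum
  fun_prop

lemma iIndepFun_normCos :
    iIndepFun (fun i (θ : UnitAddTorus ι) ↦ normCos (θ i)) volume :=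
  iIndepFun_pi fun _ ↦ continuous_normCos.aemeasurable

lemma volume_cosineSum_eq_null {a : ι → ℝ} {j : ι} (ha : a j ≠ 0) (c : ℝ) :
    volume {θ | cosineSum a θ = c} = 0 := by
  have h_indep : iIndepFun (fun i (θ : UnitAddTorus ι) ↦ a i * normCos (θ i)) volume :=
    iIndepFun_normCos.comp (fun i ↦ (a i * ·)) fun i ↦ measurable_const_mul (a i)
  refine measure_sum_eq_null_of_iIndepFun (j := j) h_indep (fun i ↦ ?_) (fun d ↦ ?_) c
  · exact (continuous_normCos.measurable.comp (measurable_pi_apply i)).aemeasurable.const_mul _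
  · have h_fibre : {θ : UnitAddTorus ι | a j * normCos (θ j) = d} =
        Function.eval j ⁻¹' {θ | normCos θ = d / a j} := by
      ext θ
      simp [eq_div_iff ha, mul_comm]
    rw [h_fibre, volume_pi, (measurePreserving_eval _ j).measure_preimage ?_]
    · exact volume_normCos_eq_null _
    · exact (measurableSet_eq_fun continuous_normCos.measurable measurable_const).nullMeasurableSet

theorem tendsto_measureReal_cosineSum_torusFlow {w : ι → ℝ} (hw : LinearIndependent ℤ w)
    {a : ι → ℝ} {j : ι} (ha : a j ≠ 0) (x : ℝ) :
    Tendsto (fun T ↦ volume.real {u | cosineSum a (torusFlow w (uniformTime T u)) ≤ x}) atTop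
      (𝓝 (volume.real {θ | cosineSum a θ ≤ x})) := by
  have h_flow : TendstoInDistribution (fun T ↦ torusFlow w ∘ uniformTime T) atTop id
      (fun _ ↦ volume) (volume : Measure (UnitAddTorus ι)) :=
    tendstoInDistribution_torusFlow hw (fun T ↦ (continuous_uniformTime T).aemeasurable)
      fun _ ↦ tendsto_charFun_map_uniformTime
  exact tendsto_measureReal_le_of_tendstoInDistribution
    (h_flow.continuous_comp (continuous_cosineSum a)) (volume_cosineSum_eq_null ha x)

theorem tendstoInDistribution_cosineSum {κ : Type*} {l : Filter κ} [l.IsCountablyGenerated]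
    {ι : κ → Type*} [∀ k, Fintype (ι k)] {a : ∀ k, ι k → ℝ} {v : ℝ≥0}
    (h_max : Tendsto (fun k ↦ ‖a k‖) l (𝓝 0))
    (h_sum : Tendsto (fun k ↦ ∑ i, a k i ^ 2) l (𝓝 v)) :
    TendstoInDistribution (fun k ↦ cosineSum (a k)) l id (fun _ ↦ volume) (gaussianReal 0 v) := by
  have h_meas : AEMeasurable normCos := continuous_normCos.aemeasurable
  have : IsProbabilityMeasure (volume.map normCos) := Measure.isProbabilityMeasure_map h_meas
  refine tendstoInDistribution_sum_mul_gaussianReal (ν := volume.map normCos) ?_ ?_ (fun k i ↦ ?_)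
    (fun _ ↦ iIndepFun_normCos) h_max h_sum
  · rw [integral_map h_meas (by fun_prop)]
    exact integral_normCos
  · rw [integral_map h_meas (by fun_prop)]
    exact integral_normCos_sq
  · have h_law : HasLaw normCos (volume.map normCos) volume := ⟨h_meas, rfl⟩
    have h_eval : HasLaw (fun θ : UnitAddTorus (ι k) ↦ θ i) volume volume :=
      (measurePreserving_eval (fun _ ↦ volume) i).hasLaw
    exact h_law.comp h_eval

end RandomCosines

section PrimeSum

open ProbabilityTheory
open scoped Topology NNReal

lemma re_primeZetaTrunc (t τ : ℝ) :
    (primeZetaTrunc t τ).re = ∑ p ∈ primesUpTo t, (√p)⁻¹ * cos (τ * log p) := by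
  rw [primeZetaTrunc, Complex.re_sum]
  refine Finset.sum_congr rfl fun p hp ↦ ?_
  have hp_pos : 0 < p := (Finset.mem_filter.1 hp).2.pos
  have h_exponent : -(1 / 2 + Complex.I * (τ : ℂ)) = (-(1 / 2) : ℝ) + (-τ : ℝ) * Complex.I := by
    push_cast
    ring
  have h_cpow : ((p : ℝ) : ℂ) ^ ((-τ : ℝ) * Complex.I) =
      Complex.exp ((-(τ * log p) : ℝ) * Complex.I) := by
    rw [Complex.cpow_def_of_ne_zero (mod_cast hp_pos.ne'), ← Complex.ofReal_log p.cast_nonneg]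
    push_cast
    ring_nf
  rw [← Complex.ofReal_natCast, h_exponent, Complex.cpow_add _ _ (mod_cast hp_pos.ne'), h_cpow,
    ← Complex.ofReal_cpow p.cast_nonneg, Complex.re_ofReal_mul, Complex.exp_ofReal_mul_I_re,
    cos_neg, rpow_neg p.cast_nonneg, ← sqrt_eq_rpow]

/-- The coefficient of `p ^ (-iτ)` in the normalized sum `P_t (1/2 + iτ) / √(log log t)`. -/
noncomputable def primeWeight (t : ℝ) (p : primesUpTo t) : ℝ :=
  (√(p : ℕ))⁻¹ / √(log (log t))

lemma tendsto_norm_primeWeight : Tendsto (fun t ↦ ‖primeWeight t‖) atTop (𝓝 0) := by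
  have h_bound : Tendsto (fun t : ℝ ↦ (√(log (log t)))⁻¹) atTop (𝓝 0) :=
    (tendsto_sqrt_atTop.comp tendsto_log_log_atTop).inv_tendsto_atTop
  refine squeeze_zero (fun _ ↦ norm_nonneg _) (fun t ↦ ?_) h_bound
  refine (pi_norm_le_iff_of_nonneg (by positivity)).2 fun p ↦ ?_
  have hp : (1 : ℝ) ≤ (p : ℕ) := mod_cast (Finset.mem_filter.1 p.2).2.one_le
  rw [primeWeight, norm_of_nonneg (by positivity)]
  calc (√(p : ℕ))⁻¹ / √(log (log t))
    _ ≤ 1 / √(log (log t)) := by gcongr; exact inv_le_one_of_one_le₀ (one_le_sqrt.2 hp)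
    _ = (√(log (log t)))⁻¹ := one_div _

lemma tendsto_sum_primeWeight_sq : Tendsto (fun t ↦ ∑ p, primeWeight t p ^ 2) atTop (𝓝 1) := by
  refine tendsto_sum_prime_inv_div_log_log.congr' ?_
  filter_upwards [tendsto_log_log_atTop.eventually_ge_atTop 0] with t ht
  rw [Finset.sum_div, ← Finset.sum_coe_sort]
  refine Finset.sum_congr rfl fun p _ ↦ ?_
  rw [primeWeight, div_pow, inv_pow, sq_sqrt (Nat.cast_nonneg _), sq_sqrt ht]

lemma primeZetaTrunc_re_le_iff {t : ℝ} (ht : 0 < log (log t)) (τ x : ℝ) :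
    (primeZetaTrunc t τ).re ≤ x * √(1 / 2 * log (log t)) ↔
      cosineSum (primeWeight t) (torusFlow (fun p : primesUpTo t ↦ log (p : ℕ)) τ) ≤ x := by
  have h_sum : cosineSum (primeWeight t) (torusFlow (fun p : primesUpTo t ↦ log (p : ℕ)) τ) =
      (primeZetaTrunc t τ).re / √(1 / 2 * log (log t)) := by
    rw [re_primeZetaTrunc, Finset.sum_div, ← Finset.sum_coe_sort, cosineSum]
    refine Finset.sum_congr rfl fun p _ ↦ ?_
    rw [normCos_torusFlow, primeWeight, sqrt_mul (by norm_num), sqrt_div zero_le_one, sqrt_one]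
    field_simp
  rw [h_sum, div_le_iff₀ (by positivity)]

lemma measureReal_gaussianReal_le (x : ℝ) :
    (gaussianReal 0 1).real {y | y ≤ x} = stdNormalCDF x := by
  have h_pdf : stdNormalCDF x = ∫ u in Set.Iic x, gaussianPDFReal 0 1 u := by
    simp [stdNormalCDF, gaussianPDFReal, integral_const_mul]
  rw [h_pdf, measureReal_def, gaussianReal_apply_eq_integral 0 one_ne_zero, ENNReal.toReal_ofReal]
  · rfl
  · exact integral_nonneg fun u ↦ gaussianPDFReal_nonneg 0 1 u

lemma primeWeight_two_ne_zero {t : ℝ} (ht : 0 < log (log t)) (h_two : 2 ∈ primesUpTo t) :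
    primeWeight t ⟨2, h_two⟩ ≠ 0 := by
  unfold primeWeight
  positivity

theorem tendsto_measureReal_primeZetaTrunc_re_le {t : ℝ} (h_two_le : 2 ≤ t)
    (ht : 0 < log (log t)) (x : ℝ) :
    Tendsto (fun T ↦ (1 / T) * (volume {τ | τ ∈ Set.Icc T (2 * T) ∧
        (primeZetaTrunc t τ).re ≤ x * √((1 / 2) * log (log t))}).toReal) atTop
      (𝓝 (volume.real {θ | cosineSum (primeWeight t) θ ≤ x})) := by
  have h_two : 2 ∈ primesUpTo t := by
    simp [primesUpTo, Nat.le_floor_iff' two_ne_zero, Nat.prime_two, h_two_le]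
  refine (tendsto_measureReal_cosineSum_torusFlow (linearIndependent_log_primesUpTo t)
    (primeWeight_two_ne_zero ht h_two) x).congr' ?_
  filter_upwards [eventually_gt_atTop 0] with T hT
  simp only [one_div_mul_volume_Icc_eq_measureReal_uniformTime hT, primeZetaTrunc_re_le_iff ht]

theorem tendsto_measureReal_cosineSum_primeWeight (x : ℝ) :
    Tendsto (fun t ↦ volume.real {θ | cosineSum (primeWeight t) θ ≤ x}) atTop
      (𝓝 (stdNormalCDF x)) := by
  have : NullSingletonClass (gaussianReal 0 1) := nullSingletonClass_gaussianReal one_ne_zero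
  rw [← measureReal_gaussianReal_le]
  exact tendsto_measureReal_le_of_tendstoInDistribution (tendstoInDistribution_cosineSum
    tendsto_norm_primeWeight (mod_cast tendsto_sum_primeWeight_sq)) (measure_singleton x)

end PrimeSum

theorem stmt7 (x : ℝ) :
    ∃ L : ℝ → ℝ,
      (∀ᶠ t in (atTop : Filter ℝ),
        Tendsto
          (fun T : ℝ => (1 / T) *
            (volume {τ : ℝ | τ ∈ Set.Icc T (2 * T) ∧
              (primeZetaTrunc t τ).re ≤ x * Real.sqrt ((1 / 2) * Real.log (Real.log t))}).toReal)
          atTop (nhds (L t))) ∧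
      Tendsto L atTop (nhds (stdNormalCDF x)) := by
  refine ⟨fun t ↦ volume.real {θ | cosineSum (primeWeight t) θ ≤ x}, ?_,
    tendsto_measureReal_cosineSum_primeWeight x⟩
  filter_upwards [eventually_ge_atTop 2, tendsto_log_log_atTop.eventually_gt_atTop 0]
    with t h_two_le h_log_log
  exact tendsto_measureReal_primeZetaTrunc_re_le h_two_le h_log_log x
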